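/- Let G be a connected simple graph on n ≥ 2 vertices. Let M be the Metropolis matrix of G: M_{ij} = 1/max(d_i, d_j) if (i,j) is an edge (d_i the degree of i), M_{ii} = 1 − Σ_{j adjacent to i} 1/max(d_i, d_j), and M_{ij} = 0 otherwise; let M̃ = (I + M)/2 be the lazy Metropolis matrix. Then the second largest eigenvalue of the matrix W̄_{P^m} = (1 − 1/n)·I + (1/n)·M̃ satisfies λ_{n−1}(W̄_{P^m}) ≤ 1 − 1/(71·n³). -/

import Mathlib

open Matrix BigOperators Finset

/-- The Metropolis matrix of a graph: `M_{ij} = 1/max(d_i,d_j)` on edges,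
`M_{ii} = 1 − Σ_{j ∼ i} 1/max(d_i,d_j)`, and `0` otherwise. -/
noncomputable def metropolis {n : ℕ} (G : SimpleGraph (Fin n)) [DecidableRel G.Adj] :
    Matrix (Fin n) (Fin n) ℝ :=
  Matrix.of fun i j =>
    if G.Adj i j then 1 / ((max (G.degree i) (G.degree j) : ℕ) : ℝ)
    else if i = j then 1 - ∑ k ∈ G.neighborFinset i, 1 / ((max (G.degree i) (G.degree k) : ℕ) : ℝ)
    else 0

/-- The lazy Metropolis matrix `M̃ = (I + M)/2`. -/
noncomputable def lazyMetropolis {n : ℕ} (G : SimpleGraph (Fin n)) [DecidableRel G.Adj] :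
    Matrix (Fin n) (Fin n) ℝ :=
  (1 / 2 : ℝ) • ((1 : Matrix (Fin n) (Fin n) ℝ) + metropolis G)

/-- Metropolis edge weights. -/
noncomputable def mw {n : ℕ} (G : SimpleGraph (Fin n)) [DecidableRel G.Adj] (i j : Fin n) : ℝ :=
  if G.Adj i j then 1 / ((max (G.degree i) (G.degree j) : ℕ) : ℝ) else 0

lemma mw_nonneg {n : ℕ} (G : SimpleGraph (Fin n)) [DecidableRel G.Adj] (i j : Fin n) :
    0 ≤ mw G i j := by
  unfold mw; split_ifs <;> positivity

lemma mw_symm {n : ℕ} (G : SimpleGraph (Fin n)) [DecidableRel G.Adj] (i j : Fin n) :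
    mw G i j = mw G j i := by
  unfold mw; simp only [G.adj_comm i j, max_comm (G.degree i)]

lemma metropolis_eq {n : ℕ} (G : SimpleGraph (Fin n)) [DecidableRel G.Adj] (i j : Fin n) :
    metropolis G i j = mw G i j + if i = j then 1 - ∑ k, mw G i k else 0 := by
  have h : ∑ k, mw G i k =
      ∑ k ∈ G.neighborFinset i, 1 / ((max (G.degree i) (G.degree k) : ℕ) : ℝ) := by
    unfold mw
    rw [← Finset.sum_filter]
    congr 1
    ext k; simp
  rw [h]
  unfold metropolis mw
  simp only [Matrix.of_apply]
  by_cases hij : i = j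
  · subst hij; simp
  · simp [hij]

lemma metropolis_form {n : ℕ} (G : SimpleGraph (Fin n)) [DecidableRel G.Adj] (x : Fin n → ℝ) :
    x ⬝ᵥ (metropolis G *ᵥ x) = x ⬝ᵥ x - (1 / 2) * ∑ i, ∑ j, mw G i j * (x i - x j) ^ 2 := by
  have h1 : ∀ i, (metropolis G *ᵥ x) i = x i + ∑ j, mw G i j * (x j - x i) := by
    intro i
    simp only [Matrix.mulVec, dotProduct, metropolis_eq, add_mul, Finset.sum_add_distrib,
      ite_mul, zero_mul, Finset.sum_ite_eq, Finset.mem_univ, if_true, mul_sub,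
      Finset.sum_sub_distrib, ← Finset.sum_mul]
    ring
  have h2 : ∑ i, ∑ j, mw G i j * (x i * (x j - x i)) =
      ∑ i, ∑ j, mw G i j * (x j * (x i - x j)) := by
    rw [Finset.sum_comm]
    refine Finset.sum_congr rfl fun i _ => Finset.sum_congr rfl fun j _ => ?_
    rw [mw_symm]
  have h3 : ∑ i, ∑ j, mw G i j * (x i - x j) ^ 2 =
      - ∑ i, ∑ j, mw G i j * (x i * (x j - x i)) - ∑ i, ∑ j, mw G i j * (x j * (x i - x j)) := by
    rw [← Finset.sum_neg_distrib, ← Finset.sum_sub_distrib]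
    refine Finset.sum_congr rfl fun i _ => ?_
    rw [← Finset.sum_neg_distrib, ← Finset.sum_sub_distrib]
    refine Finset.sum_congr rfl fun j _ => ?_
    ring
  have h4 : x ⬝ᵥ (metropolis G *ᵥ x) =
      x ⬝ᵥ x + ∑ i, ∑ j, mw G i j * (x i * (x j - x i)) := by
    simp only [dotProduct, h1, mul_add, Finset.sum_add_distrib, Finset.mul_sum]
    congr 1
    refine Finset.sum_congr rfl fun i _ => Finset.sum_congr rfl fun j _ => ?_
    ring
  rw [h4, h3, ← h2]; ring

/-- Sum of degrees along a geodesic is at most `3n`. -/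
lemma geodesic_degrees {n : ℕ} (G : SimpleGraph (Fin n)) [DecidableRel G.Adj]
    (hconn : G.Connected) (u : Fin n) (L : ℕ) (p : ℕ → Fin n)
    (hp : ∀ k ≤ L, G.dist u (p k) = k) :
    ∑ k ∈ range (L + 1), G.degree (p k) ≤ 3 * n := by
  have h1 : ∀ k, G.degree (p k) = ∑ w : Fin n, if G.Adj (p k) w then 1 else 0 := by
    intro k
    rw [← G.card_neighborFinset_eq_degree, Finset.sum_boole, Nat.cast_id]
    congr 1
    ext w; simp
  simp only [h1]
  rw [Finset.sum_comm]
  have h2 : ∀ w : Fin n, (∑ k ∈ range (L + 1), if G.Adj (p k) w then 1 else 0) ≤ 3 := by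
    intro w
    rw [Finset.sum_boole, Nat.cast_id]
    have hsub : (range (L + 1)).filter (fun k => G.Adj (p k) w) ⊆
        Finset.Icc (G.dist u w - 1) (G.dist u w + 1) := by
      intro k hk
      simp only [Finset.mem_filter, Finset.mem_range] at hk
      have hd := hp k (by omega)
      have a1 : G.dist (p k) w = 1 := SimpleGraph.dist_eq_one_iff_adj.2 hk.2
      have a2 := hconn.dist_triangle (u := u) (v := p k) (w := w)
      have a3 := hconn.dist_triangle (u := u) (v := w) (w := p k)
      rw [SimpleGraph.dist_comm (u := w)] at a3
      simp only [Finset.mem_Icc]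
      omega
    refine (Finset.card_le_card hsub).trans ?_
    rw [Nat.card_Icc]; omega
  calc _ ≤ ∑ w : Fin n, 3 := Finset.sum_le_sum fun w _ => h2 w
    _ = 3 * n := by simp [mul_comm]

lemma pair_bound {n : ℕ} (G : SimpleGraph (Fin n)) [DecidableRel G.Adj]
    (hconn : G.Connected) (x : Fin n → ℝ) (u v : Fin n) :
    (x u - x v) ^ 2 ≤ 6 * n * ∑ i, ∑ j, mw G i j * (x i - x j) ^ 2 := by
  obtain ⟨p, hpL⟩ := hconn.exists_walk_length_eq_dist u v
  set L := p.length with hL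
  have hdist : ∀ k ≤ L, G.dist u (p.getVert k) = k := by
    intro k hk
    have a1 : G.dist u (p.getVert k) ≤ k := by
      have := SimpleGraph.dist_le (p.take k)
      rw [SimpleGraph.Walk.take_length] at this
      omega
    have a2 : G.dist (p.getVert k) v ≤ L - k := by
      have := SimpleGraph.dist_le (p.drop k)
      rw [SimpleGraph.Walk.drop_length] at this
      omega
    have a3 := hconn.dist_triangle (u := u) (v := p.getVert k) (w := v)
    omega
  have hdeg := geodesic_degrees G hconn u L p.getVert hdist
  set d : ℕ → ℝ := fun k => ((max (G.degree (p.getVert k)) (G.degree (p.getVert (k+1))) : ℕ) : ℝ)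
    with hd
  have hadj : ∀ k < L, G.Adj (p.getVert k) (p.getVert (k+1)) := fun k hk =>
    p.adj_getVert_succ hk
  have hdpos : ∀ k < L, 0 < d k := by
    intro k hk
    have : 0 < G.degree (p.getVert k) := by
      rw [G.degree_pos_iff_exists_adj]; exact ⟨_, hadj k hk⟩
    simp only [hd]
    exact_mod_cast lt_of_lt_of_le this (le_max_left _ _)
  have hdsum : ∑ k ∈ range L, d k ≤ 6 * n := by
    have hnat : ∑ k ∈ range L, max (G.degree (p.getVert k)) (G.degree (p.getVert (k+1))) ≤ 6 * n := by
      have b1 := Finset.sum_range_succ (fun k => G.degree (p.getVert k)) L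
      have b2 := Finset.sum_range_succ' (fun k => G.degree (p.getVert k)) L
      have b3 : ∑ k ∈ range L, max (G.degree (p.getVert k)) (G.degree (p.getVert (k+1))) ≤
          ∑ k ∈ range L, (G.degree (p.getVert k) + G.degree (p.getVert (k+1))) :=
        Finset.sum_le_sum fun k _ => max_le (by omega) (by omega)
      rw [Finset.sum_add_distrib] at b3
      omega
    simp only [hd]
    exact_mod_cast hnat
  have htel : x u - x v = ∑ k ∈ range L, (x (p.getVert k) - x (p.getVert (k+1))) := by
    rw [Finset.sum_range_sub' (fun k => x (p.getVert k))]
    simp [hL]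
  have hen : ∑ k ∈ range L, (x (p.getVert k) - x (p.getVert (k+1))) ^ 2 / d k ≤
      ∑ i, ∑ j, mw G i j * (x i - x j) ^ 2 := by
    have c1 : ∑ k ∈ range L, (x (p.getVert k) - x (p.getVert (k+1))) ^ 2 / d k =
        ∑ q ∈ (range L).image (fun k => (p.getVert k, p.getVert (k+1))),
          mw G q.1 q.2 * (x q.1 - x q.2) ^ 2 := by
      rw [Finset.sum_image]
      · refine Finset.sum_congr rfl fun k hk => ?_
        have := hadj k (Finset.mem_range.1 hk)
        simp only [mw, this, if_true, hd]
        ring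
      · intro a ha b hb hab
        simp only [Finset.coe_range, Set.mem_Iio] at ha hb
        have e := (Prod.mk.inj hab).1
        have e1 := hdist a ha.le
        have e2 := hdist b hb.le
        rw [e] at e1
        omega
    rw [c1, ← Fintype.sum_prod_type' (fun i j => mw G i j * (x i - x j) ^ 2)]
    exact Finset.sum_le_sum_of_subset_of_nonneg (Finset.subset_univ _)
      fun q _ _ => mul_nonneg (mw_nonneg _ _ _) (sq_nonneg _)
  have hcs : (x u - x v) ^ 2 ≤ (∑ k ∈ range L, d k) *
      ∑ k ∈ range L, (x (p.getVert k) - x (p.getVert (k+1))) ^ 2 / d k := by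
    rw [htel]
    refine Finset.sum_sq_le_sum_mul_sum_of_sq_le_mul _ ?_ ?_ ?_
    · intro k hk; exact (hdpos k (Finset.mem_range.1 hk)).le
    · intro k hk; exact div_nonneg (sq_nonneg _) (hdpos k (Finset.mem_range.1 hk)).le
    · intro k hk
      have := hdpos k (Finset.mem_range.1 hk)
      exact le_of_eq (by field_simp)
  refine hcs.trans (mul_le_mul hdsum hen ?_ (by positivity))
  exact Finset.sum_nonneg fun k hk => div_nonneg (sq_nonneg _) (hdpos k (Finset.mem_range.1 hk)).le

lemma poincare {n : ℕ} (hn : 2 ≤ n) (G : SimpleGraph (Fin n)) [DecidableRel G.Adj]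
    (hconn : G.Connected) (x : Fin n → ℝ) (hx : ∑ i, x i = 0) :
    x ⬝ᵥ x ≤ 3 * n ^ 2 * ∑ i, ∑ j, mw G i j * (x i - x j) ^ 2 := by
  set Q := ∑ i, ∑ j, mw G i j * (x i - x j) ^ 2
  have h1 : ∑ u, ∑ v, (x u - x v) ^ 2 ≤ ∑ u : Fin n, ∑ v : Fin n, 6 * n * Q :=
    Finset.sum_le_sum fun u _ => Finset.sum_le_sum fun v _ => pair_bound G hconn x u v
  have h2 : ∑ u, ∑ v, (x u - x v) ^ 2 = 2 * n * (x ⬝ᵥ x) := by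
    have : ∀ u v, (x u - x v) ^ 2 = x u * x u - 2 * (x u * x v) + x v * x v := by intros; ring
    simp only [this, Finset.sum_add_distrib, Finset.sum_sub_distrib, ← Finset.mul_sum, hx,
      dotProduct]
    simp only [mul_zero, Finset.sum_const_zero, Finset.sum_const, Finset.card_univ,
      Fintype.card_fin, nsmul_eq_mul, mul_left_comm _ (n : ℝ)]
    rw [← Finset.mul_sum]
    ring
  rw [h2] at h1
  simp only [Finset.sum_const, Finset.card_univ, Fintype.card_fin, nsmul_eq_mul] at h1
  have hn0 : (0 : ℝ) < n := by exact_mod_cast (by omega : 0 < n)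
  have : (2 * n : ℝ) * (x ⬝ᵥ x) ≤ (2 * n) * (3 * n ^ 2 * Q) := by
    refine h1.trans (le_of_eq ?_); ring
  exact le_of_mul_le_mul_left this (by positivity)

/-- If a symmetric matrix has its quadratic form at most `c` on the mean-zero vectors, the second
largest eigenvalue is at most `c`. -/
lemma second_eig {n : ℕ} (hn : 2 ≤ n) (hlt2 : n - 2 < n) (W : Matrix (Fin n) (Fin n) ℝ) (hW : W.IsHermitian) (c : ℝ)
    (hc : ∀ x : Fin n → ℝ, ∑ i, x i = 0 → x ⬝ᵥ (W *ᵥ x) ≤ c * (x ⬝ᵥ x))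
    (μ : Fin n → ℝ) (hμ : Monotone μ)
    (hch : W.charpoly = ∏ i : Fin n, (Polynomial.X - Polynomial.C (μ i))) :
    μ ⟨n - 2, hlt2⟩ ≤ c := by
  by_contra! hlt
  have hms : Multiset.map hW.eigenvalues univ.val = Multiset.map μ univ.val := by
    have e1 := hW.roots_charpoly_eq_eigenvalues
    have e2 := Multiset.map_map (fun t : ℝ => Polynomial.X - Polynomial.C t) μ univ.val
    have e3 : (∏ i : Fin n, (Polynomial.X - Polynomial.C (μ i))).roots =
        Multiset.map μ univ.val := by
      rw [← Polynomial.roots_multiset_prod_X_sub_C (Multiset.map μ univ.val), e2]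
      rfl
    rw [hch, e3] at e1
    simpa using e1.symm
  have hcard : (univ.filter fun i => c < hW.eigenvalues i).card =
      (univ.filter fun i => c < μ i).card := by
    have := congrArg (Multiset.countP (fun t => c < t)) hms
    rw [Multiset.countP_map, Multiset.countP_map] at this
    exact this
  have h2 : 1 < (univ.filter fun i => c < μ i).card := by
    rw [Finset.one_lt_card]
    refine ⟨⟨n - 2, hlt2⟩, by simpa using hlt, ⟨n - 1, by omega⟩, ?_, ?_⟩
    · simp only [Finset.mem_filter, Finset.mem_univ, true_and]
      exact hlt.trans_le (hμ (by simp [Fin.le_def]; omega))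
    · intro h; simp [Fin.ext_iff] at h; omega
  rw [← hcard, Finset.one_lt_card] at h2
  obtain ⟨i, hi, j, hj, hij⟩ := h2
  simp only [Finset.mem_filter, Finset.mem_univ, true_and] at hi hj
  set a : Fin n → ℝ := ⇑(hW.eigenvectorBasis i) with ha
  set b : Fin n → ℝ := ⇑(hW.eigenvectorBasis j) with hb
  have hWa : W *ᵥ a = hW.eigenvalues i • a := hW.mulVec_eigenvectorBasis i
  have hWb : W *ᵥ b = hW.eigenvalues j • b := hW.mulVec_eigenvectorBasis j
  have ho := orthonormal_iff_ite.1 hW.eigenvectorBasis.orthonormal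
  have haa : a ⬝ᵥ a = 1 := by
    have := ho i i
    rw [EuclideanSpace.inner_eq_star_dotProduct] at this
    simpa only [star_trivial, if_true] using this
  have hbb : b ⬝ᵥ b = 1 := by
    have := ho j j
    rw [EuclideanSpace.inner_eq_star_dotProduct] at this
    simpa only [star_trivial, if_true] using this
  have hba : b ⬝ᵥ a = 0 := by
    have := ho i j
    rw [EuclideanSpace.inner_eq_star_dotProduct, if_neg hij] at this
    simpa only [star_trivial] using this
  have hab : a ⬝ᵥ b = 0 := by rw [dotProduct_comm, hba]
  obtain ⟨s, t, hst, hsum⟩ : ∃ s t : ℝ, 0 < s ^ 2 + t ^ 2 ∧ s * ∑ k, a k + t * ∑ k, b k = 0 := by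
    by_cases h : ∑ k, a k = 0
    · exact ⟨1, 0, by norm_num, by simp [h]⟩
    · exact ⟨-∑ k, b k, ∑ k, a k, by positivity, by ring⟩
  have key := hc (s • a + t • b) (by
    simpa [Finset.sum_add_distrib, ← Finset.mul_sum] using hsum)
  simp only [Matrix.mulVec_add, Matrix.mulVec_smul, hWa, hWb, dotProduct_add, add_dotProduct,
    smul_dotProduct, dotProduct_smul, haa, hbb, hab, hba, smul_eq_mul] at key
  rcases eq_or_ne s 0 with h0 | h0
  · subst h0
    have : 0 < t ^ 2 := by simpa using hst
    nlinarith
  · have : 0 < s ^ 2 := by positivity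
    nlinarith [sq_nonneg t]

/-- For any connected graph on `n ≥ 2` vertices, the second largest eigenvalue of the lazy
Metropolis gossiping matrix `W̄_{P^m} = (1 − 1/n) I + (1/n) M̃` is at most `1 − 1/(71 n³)`. -/
theorem stmt18 (n : ℕ) (hn : 2 ≤ n) (G : SimpleGraph (Fin n)) [DecidableRel G.Adj]
    (hconn : G.Connected)
    (Wm : Matrix (Fin n) (Fin n) ℝ)
    (hWm : Wm = (1 - 1 / (n : ℝ)) • (1 : Matrix (Fin n) (Fin n) ℝ)
      + (1 / (n : ℝ)) • lazyMetropolis G) :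
    ∀ μ : Fin n → ℝ, Monotone μ →
      Wm.charpoly = ∏ i : Fin n, (Polynomial.X - Polynomial.C (μ i)) →
      μ ⟨n - 2, by omega⟩ ≤ 1 - 1 / (71 * (n : ℝ) ^ 3) := by
  intro μ hμ hch
  have hn0 : (0 : ℝ) < n := by exact_mod_cast (by omega : 0 < n)
  refine second_eig hn _ Wm ?_ _ ?_ μ hμ hch
  · have hM : (metropolis G)ᵀ = metropolis G := by
      ext i j
      rw [Matrix.transpose_apply, metropolis_eq, metropolis_eq, mw_symm]
      by_cases h : i = j
      · subst h; rfl
      · simp [h, Ne.symm h]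
    rw [Matrix.IsHermitian, Matrix.conjTranspose_eq_transpose_of_trivial, hWm, lazyMetropolis]
    simp [hM]
  · intro x hx
    have hp := poincare hn G hconn x hx
    have hf := metropolis_form G x
    have hxx : 0 ≤ x ⬝ᵥ x := Finset.sum_nonneg fun i _ => mul_self_nonneg _
    rw [hWm, lazyMetropolis]
    simp only [Matrix.add_mulVec, Matrix.smul_mulVec, Matrix.one_mulVec, dotProduct_add,
      dotProduct_smul, hf, smul_eq_mul]
    set Q := ∑ i, ∑ j, mw G i j * (x i - x j) ^ 2
    set S := x ⬝ᵥ x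
    have h1 : 1 / (71 * (n : ℝ) ^ 3) * S ≤ 1 / n * (1 / 4 * Q) := by
      have : 1 / (71 * (n : ℝ) ^ 3) * S = (1 / n) * (S / (71 * n ^ 2)) := by
        field_simp
      rw [this]
      refine mul_le_mul_of_nonneg_left ?_ (by positivity)
      rw [div_le_iff₀ (by positivity)]
      nlinarith
    have h2 : (1 - 1 / (n : ℝ)) * S + 1 / n * (1 / 2 * (S + (S - 1 / 2 * Q))) =
        S - 1 / n * (1 / 4 * Q) := by ring
    rw [h2]
    linarith
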